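/- arXiv:1309.7664 — 2 statements merged into one kernel-verified Lean document; each statement's English description precedes it below -/
import Mathlib

section
/- Let A ∈ ℂ^{m×l} and B ∈ ℂ^{l×m}. If there exists an index k₀ ∈ {1,…,m} such that ‖B_{·k₀}‖_{ℓq} < max_{1≤k≤m} ‖B_{·k}‖_{ℓq} and the row A_{k₀·} ≠ 0, then the inequality is strict: |trace(AB)| < (max_{1≤k≤m} ‖B_{·k}‖_{ℓq}) · J_{p,1}(A). -/
/-!
By Hölder's inequality each diagonal entry satisfies
`|(AB)_{kk}| ≤ ‖A_{k·}‖_p ‖B_{·k}‖_q ≤ (max_j ‖B_{·j}‖_q) ‖A_{k·}‖_p`, and for `k = k₀` the second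
step is strict because `‖A_{k₀·}‖_p > 0`. Summing over `k` gives the strict bound for the trace.
Hölder's inequality for extended exponents (`norm_sum_mul_le_lpnorm_mul`) splits into the cases
`p = 1`, `q = 1`, and both exponents finite.
-/

open Finset ENNReal

/-- The vector ℓp norm on `ℂ^n` for an extended-real exponent `p ∈ [1,∞]`,
via the `PiLp` norm. -/
noncomputable def lpnorm (p : ℝ≥0∞) {n : ℕ} (v : Fin n → ℂ) : ℝ :=
  ‖(WithLp.equiv p (Fin n → ℂ)).symm v‖

/-- The `J_{p,1}` norm of a matrix: sum of the ℓp norms of its rows. -/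
noncomputable def Jp1 (p : ℝ≥0∞) {m l : ℕ} (A : Matrix (Fin m) (Fin l) ℂ) : ℝ :=
  ∑ i, lpnorm p (A i)

/-- The endpoint case `p = 1`, `q = ∞` of Hölder's inequality. -/
lemma sum_norm_mul_le_lpnorm_one_top {n : ℕ} (a b : Fin n → ℂ) :
    ∑ i, ‖a i‖ * ‖b i‖ ≤ lpnorm 1 a * lpnorm ⊤ b := by
  have h1 : lpnorm 1 a = ∑ i, ‖a i‖ := by
    simp [lpnorm, PiLp.norm_eq_of_L1]
  rw [h1, Finset.sum_mul]
  refine Finset.sum_le_sum fun i _ => mul_le_mul_of_nonneg_left ?_ (norm_nonneg _)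
  exact PiLp.norm_apply_le ((WithLp.equiv ⊤ (Fin n → ℂ)).symm b) i

lemma norm_sum_mul_le_lpnorm_mul {n : ℕ} {p q : ℝ≥0∞} (hpq : 1 / p + 1 / q = 1)
    (a b : Fin n → ℂ) : ‖∑ i, a i * b i‖ ≤ lpnorm p a * lpnorm q b := by
  refine (norm_sum_le _ _).trans ?_
  simp only [norm_mul]
  have hc : ENNReal.HolderConjugate p q :=
    ENNReal.holderConjugate_iff.2 (by simpa using hpq)
  by_cases hp : p = ⊤
  · subst hp
    obtain rfl : q = 1 := by simpa using hpq
    simpa [mul_comm] using sum_norm_mul_le_lpnorm_one_top b a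
  by_cases hq : q = ⊤
  · subst hq
    obtain rfl : p = 1 := by simpa using hpq
    exact sum_norm_mul_le_lpnorm_one_top a b
  have hr : p.toReal.HolderConjugate q.toReal := ENNReal.HolderConjugate.toReal_of_ne_top hp hq
  have key := Real.inner_le_Lp_mul_Lq Finset.univ (fun i => ‖a i‖) (fun i => ‖b i‖) hr
  simpa [lpnorm, PiLp.norm_eq_sum hr.pos, PiLp.norm_eq_sum hr.symm.pos] using key

/-- For `1 ≤ p ≤ ∞` with conjugate exponent `q`, and any
`A ∈ ℂ^{m×l}`, `B ∈ ℂ^{l×m}`: if some index `k₀` has column `B_{·k₀}` of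
ℓq-norm strictly below the maximum while the row `A_{k₀·}` is nonzero, then
`|trace(AB)| < (max_k ‖B_{·k}‖_{ℓq}) · J_{p,1}(A)`. -/
theorem trace_lt_max_colnorm_mul_Jp1
    (m l : ℕ) (p q : ℝ≥0∞) (hp : 1 ≤ p) (hpq : 1 / p + 1 / q = 1)
    (A : Matrix (Fin m) (Fin l) ℂ) (B : Matrix (Fin l) (Fin m) ℂ)
    (k₀ : Fin m)
    (hcol : lpnorm q (fun i => B i k₀) < ⨆ k : Fin m, lpnorm q (fun i => B i k))
    (hrow : A k₀ ≠ 0) :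
    ‖Matrix.trace (A * B)‖ <
      (⨆ k : Fin m, lpnorm q (fun i => B i k)) * Jp1 p A := by
  have : Fact (1 ≤ p) := ⟨hp⟩
  have hpos : 0 < lpnorm p (A k₀) := by
    refine norm_pos_iff.2 fun h => hrow ?_
    exact (WithLp.equiv p (Fin l → ℂ)).symm.injective h
  have hle (k : Fin m) : ‖(A * B) k k‖ ≤ lpnorm q (fun i => B i k) * lpnorm p (A k) := by
    rw [Matrix.mul_apply, mul_comm]
    exact norm_sum_mul_le_lpnorm_mul hpq (A k) (fun i => B i k)
  have hsup (k : Fin m) : lpnorm q (fun i => B i k) ≤ ⨆ k : Fin m, lpnorm q (fun i => B i k) :=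
    le_ciSup (f := fun k : Fin m => lpnorm q (fun i => B i k)) (Set.finite_range _).bddAbove k
  rw [Jp1, Finset.mul_sum]
  refine (norm_sum_le _ _).trans_lt (Finset.sum_lt_sum (fun k _ => ?_) ⟨k₀, mem_univ _, ?_⟩)
  · exact (hle k).trans (mul_le_mul_of_nonneg_right (hsup k) (norm_nonneg _))
  · exact (hle k₀).trans_lt (mul_lt_mul_of_pos_right hcol hpos)
end

section
/- Let Φ ∈ ℂ^{N×m} have linearly independent columns, B ∈ ℂ^{N×ν}, λ > 0, X₀ = (Φ*Φ)^{−1}Φ*B, and let X⋆ be the unique minimizer of L(X) = (1/2)‖B − ΦX‖_F² + λ J_{2,1}(X) over ℂ^{m×ν}. Then every row of X₀ − X⋆ has ℓ2-norm at most λ · ‖(Φ*Φ)^{−1}‖_{∞→∞}, where ‖M‖_{∞→∞} = max_i Σ_k |M_{ik}| is the induced ℓ∞-to-ℓ∞ operator norm. -/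
/-!
The first-order optimality condition at the minimizer `X⋆` says that the correlation of the residual
with the columns, `G = Φ*(B - Φ X⋆)`, lies in `λ ∂J₂₁(X⋆)`; in particular each row of `G` has ℓ2-norm
at most `λ`. Only this row bound is needed (`row_correlation_le`), and it is obtained directly by
comparing `X⋆` with the competitor whose `k`-th row is moved by `ε G_k` and letting `ε → 0⁺`.
Since `Φ*Φ` is invertible, `X₀ - X⋆ = (Φ*Φ)⁻¹ G`, so each row of `X₀ - X⋆` is a combination of rows
of `G` with coefficients from a row of `(Φ*Φ)⁻¹`, and the triangle inequality gives the claim.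
-/

open Finset

/-- The `J_{2,1}` norm of a matrix: sum of the ℓ2 norms of its rows. -/
noncomputable def J21 {m ν : ℕ} (X : Matrix (Fin m) (Fin ν) ℂ) : ℝ :=
  ∑ i, Real.sqrt (∑ t, ‖X i t‖ ^ 2)

/-- The Frobenius norm of a complex matrix. -/
noncomputable def frob {m n : ℕ} (X : Matrix (Fin m) (Fin n) ℂ) : ℝ :=
  Real.sqrt (∑ i, ∑ t, ‖X i t‖ ^ 2)

lemma sqrt_sum_eq_norm {n : ℕ} (v : Fin n → ℂ) :
    Real.sqrt (∑ t, ‖v t‖ ^ 2) = ‖WithLp.toLp 2 v‖ := by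
  rw [EuclideanSpace.norm_eq]

lemma frob_sq {m n : ℕ} (X : Matrix (Fin m) (Fin n) ℂ) :
    frob X ^ 2 = ∑ i, ∑ t, ‖X i t‖ ^ 2 := by
  unfold frob
  exact Real.sq_sqrt (by positivity)

/-- Adding `v` to a single row increases `J21` by at most the ℓ2-norm of `v`. -/
lemma J21_updateRow_le {m ν : ℕ} (X : Matrix (Fin m) (Fin ν) ℂ) (k : Fin m) (v : Fin ν → ℂ) :
    J21 (X.updateRow k (X k + v)) ≤ J21 X + ‖WithLp.toLp 2 v‖ := by
  unfold J21
  have h : ∀ j, Real.sqrt (∑ t, ‖X.updateRow k (X k + v) j t‖ ^ 2) ≤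
      Real.sqrt (∑ t, ‖X j t‖ ^ 2) + if j = k then ‖WithLp.toLp 2 v‖ else 0 := by
    intro j
    rw [sqrt_sum_eq_norm, sqrt_sum_eq_norm]
    by_cases hj : j = k
    · subst hj
      rw [if_pos rfl, Matrix.updateRow_self, WithLp.toLp_add]
      exact norm_add_le _ _
    · rw [if_neg hj, Matrix.updateRow_ne hj, add_zero]
  refine (Finset.sum_le_sum fun j _ => h j).trans ?_
  rw [Finset.sum_add_distrib]
  simp

/-- The residual after moving row `k` of `X` by `v`. -/
lemma residual_updateRow {N m ν : ℕ} (Φ : Matrix (Fin N) (Fin m) ℂ) (B : Matrix (Fin N) (Fin ν) ℂ)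
    (X : Matrix (Fin m) (Fin ν) ℂ) (k : Fin m) (v : Fin ν → ℂ) (i : Fin N) (t : Fin ν) :
    (B - Φ * X.updateRow k (X k + v)) i t = (B - Φ * X) i t - Φ i k * v t := by
  have h : ∀ j, Φ i j * X.updateRow k (X k + v) j t =
      Φ i j * X j t + if j = k then Φ i k * v t else 0 := by
    intro j
    by_cases hj : j = k
    · subst hj
      simp [mul_add]
    · simp [hj]
  simp only [Matrix.sub_apply, Matrix.mul_apply, h, Finset.sum_add_distrib]
  simp [sub_sub]

lemma norm_sub_real_mul_sq (a b : ℂ) (e : ℝ) :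
    ‖a - e * b‖ ^ 2 = ‖a‖ ^ 2 - 2 * e * (star a * b).re + e ^ 2 * ‖b‖ ^ 2 := by
  simp only [← Complex.normSq_eq_norm_sq, Complex.normSq_apply]
  simp
  ring

/-- The derivative of the quadratic term in the direction of the `k`-th row of `Φ* R` is minus the
squared ℓ2-norm of that row. -/
lemma sum_re_correlation {N m ν : ℕ} (Φ : Matrix (Fin N) (Fin m) ℂ)
    (R : Matrix (Fin N) (Fin ν) ℂ) (k : Fin m) :
    ∑ i, ∑ t, (star (R i t) * (Φ i k * (Φ.conjTranspose * R) k t)).re =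
      ‖WithLp.toLp 2 ((Φ.conjTranspose * R) k)‖ ^ 2 := by
  rw [EuclideanSpace.norm_sq_eq, Finset.sum_comm]
  refine Finset.sum_congr rfl fun t _ => ?_
  have h : ∑ i, star (R i t) * (Φ i k * (Φ.conjTranspose * R) k t) =
      star ((Φ.conjTranspose * R) k t) * (Φ.conjTranspose * R) k t := by
    conv_rhs => rw [Matrix.mul_apply, star_sum, ← Matrix.mul_apply, Finset.sum_mul]
    refine Finset.sum_congr rfl fun i _ => ?_
    simp only [Matrix.conjTranspose_apply, star_mul', star_star]
    ring
  rw [← Complex.re_sum, h, ← Complex.normSq_eq_norm_sq, Complex.normSq_apply]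
  simp

/-- Every row of `Φ*(B - Φ X)` has ℓ2-norm at most `lam` when `X` minimizes the Lagrangian. -/
lemma row_correlation_le {N m ν : ℕ} (Φ : Matrix (Fin N) (Fin m) ℂ)
    (B : Matrix (Fin N) (Fin ν) ℂ) (lam : ℝ) (hlam : 0 < lam) (X : Matrix (Fin m) (Fin ν) ℂ)
    (hmin : ∀ Y : Matrix (Fin m) (Fin ν) ℂ, (1 / 2) * (frob (B - Φ * X)) ^ 2 + lam * J21 X ≤
      (1 / 2) * (frob (B - Φ * Y)) ^ 2 + lam * J21 Y) (k : Fin m) :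
    ‖WithLp.toLp 2 ((Φ.conjTranspose * (B - Φ * X)) k)‖ ≤ lam := by
  set R := B - Φ * X with hR
  set g := (Φ.conjTranspose * R) k with hg
  set C : ℝ := ∑ i, ∑ t, ‖Φ i k * g t‖ ^ 2 with hC
  have hC0 : 0 ≤ C := by positivity
  have key : ∀ e : ℝ, 0 < e →
      ‖WithLp.toLp 2 g‖ ^ 2 ≤ lam * ‖WithLp.toLp 2 g‖ + e * C := by
    intro e he
    have h1 := hmin (X.updateRow k (X k + (e : ℂ) • g))
    have h2 := J21_updateRow_le X k ((e : ℂ) • g)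
    rw [WithLp.toLp_smul, norm_smul, Complex.norm_real, Real.norm_of_nonneg he.le] at h2
    have h3 : frob (B - Φ * X.updateRow k (X k + (e : ℂ) • g)) ^ 2 =
        frob R ^ 2 - 2 * e * ‖WithLp.toLp 2 g‖ ^ 2 + e ^ 2 * C := by
      rw [frob_sq, frob_sq, hg, ← sum_re_correlation, ← hg, hC]
      simp only [Finset.mul_sum, ← Finset.sum_add_distrib, ← Finset.sum_sub_distrib]
      refine Finset.sum_congr rfl fun i _ => Finset.sum_congr rfl fun t _ => ?_
      rw [residual_updateRow, ← hR, ← norm_sub_real_mul_sq]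
      congr 2
      simp only [Pi.smul_apply, smul_eq_mul]
      ring
    rw [h3] at h1
    have h4 := mul_le_mul_of_nonneg_left h2 hlam.le
    have h5 : 0 ≤ e * (e * C) := by positivity
    have h6 : e * ‖WithLp.toLp 2 g‖ ^ 2 ≤ e * (lam * ‖WithLp.toLp 2 g‖ + e * C) := by
      linarith
    exact le_of_mul_le_mul_left h6 he
  have hlim : ‖WithLp.toLp 2 g‖ ^ 2 ≤ lam * ‖WithLp.toLp 2 g‖ := by
    refine le_of_forall_pos_le_add fun δ hδ => ?_
    have h := key (δ / (C + 1)) (by positivity)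
    have h' : δ / (C + 1) * C ≤ δ := by
      rw [div_mul_eq_mul_div, div_le_iff₀ (by positivity)]
      nlinarith
    linarith
  by_contra! hlt
  have hpos : 0 < ‖WithLp.toLp 2 g‖ := hlam.trans hlt
  nlinarith

open scoped ComplexOrder in
lemma isUnit_det_gram {N m : ℕ} (Φ : Matrix (Fin N) (Fin m) ℂ)
    (hind : LinearIndependent ℂ (fun j : Fin m => fun i => Φ i j)) :
    IsUnit (Φ.conjTranspose * Φ).det := by
  have hinj : Function.Injective Φ.mulVec := Matrix.mulVec_injective_iff.2 hind
  exact (Matrix.isUnit_iff_isUnit_det _).1 (Matrix.PosDef.conjTranspose_mul_self Φ hinj).isUnit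

/-- The norm of row `i` of `M * G` is controlled by the ℓ1-norm of row `i` of `M`. -/
lemma norm_row_mul_le {m ν : ℕ} (M : Matrix (Fin m) (Fin m) ℂ) (G : Matrix (Fin m) (Fin ν) ℂ)
    (c : ℝ) (hG : ∀ k, ‖WithLp.toLp 2 (G k)‖ ≤ c) (i : Fin m) :
    ‖WithLp.toLp 2 ((M * G) i)‖ ≤ c * ∑ k, ‖M i k‖ := by
  have h : WithLp.toLp 2 ((M * G) i) = ∑ k, M i k • WithLp.toLp 2 (G k) := by
    ext t
    simp [Matrix.mul_apply]
  rw [h, mul_comm, Finset.sum_mul]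
  refine norm_sum_le_of_le _ fun k _ => ?_
  rw [norm_smul]
  exact mul_le_mul_of_nonneg_left (hG k) (norm_nonneg _)

/-- With `Φ` of linearly independent columns, `λ > 0`,
`X₀ = (Φ*Φ)⁻¹Φ*B`, and `X⋆` the (unique) minimizer of
`L(X) = ½‖B − ΦX‖_F² + λ J_{2,1}(X)`, every row of `X₀ − X⋆` has ℓ2-norm at most
`λ ‖(Φ*Φ)⁻¹‖_{∞→∞}`, where `‖M‖_{∞→∞} = max_i Σ_k |M_{ik}|`. -/
theorem lagrangian_minimizer_row_bound
    (N m ν : ℕ) (hN : 0 < N) (hm : 0 < m) (hν : 0 < ν)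
    (Φ : Matrix (Fin N) (Fin m) ℂ)
    (hind : LinearIndependent ℂ (fun j : Fin m => fun i => Φ i j))
    (B : Matrix (Fin N) (Fin ν) ℂ) (lam : ℝ) (hlam : 0 < lam)
    (X₀ : Matrix (Fin m) (Fin ν) ℂ)
    (hX₀ : X₀ = (Φ.conjTranspose * Φ)⁻¹ * (Φ.conjTranspose * B))
    (L : Matrix (Fin m) (Fin ν) ℂ → ℝ)
    (hL : ∀ X, L X = (1 / 2) * (frob (B - Φ * X)) ^ 2 + lam * J21 X)
    (Xstar : Matrix (Fin m) (Fin ν) ℂ)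
    (hmin : ∀ Y, L Xstar ≤ L Y)
    (huniq : ∀ Y, (∀ Z, L Y ≤ L Z) → Y = Xstar) :
    ∀ i : Fin m,
      Real.sqrt (∑ t, ‖X₀ i t - Xstar i t‖ ^ 2) ≤
        lam * ⨆ i' : Fin m, ∑ k, ‖((Φ.conjTranspose * Φ)⁻¹) i' k‖ := by
  intro i
  have hdet := isUnit_det_gram Φ hind
  have hG := row_correlation_le Φ B lam hlam Xstar fun Y => by
    rw [← hL, ← hL]
    exact hmin Y
  have hdiff : X₀ - Xstar =
      (Φ.conjTranspose * Φ)⁻¹ * (Φ.conjTranspose * (B - Φ * Xstar)) := by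
    rw [hX₀, Matrix.mul_sub, Matrix.mul_sub, ← Matrix.mul_assoc Φ.conjTranspose Φ Xstar,
      Matrix.nonsing_inv_mul_cancel_left _ _ hdet]
  have hrow := norm_row_mul_le (Φ.conjTranspose * Φ)⁻¹ _ lam hG i
  rw [← hdiff, ← sqrt_sum_eq_norm] at hrow
  refine hrow.trans (mul_le_mul_of_nonneg_left ?_ hlam.le)
  exact le_ciSup (f := fun i' : Fin m => ∑ k, ‖((Φ.conjTranspose * Φ)⁻¹) i' k‖)
    (Set.finite_range _).bddAbove i
end
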